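/- Let α ∈ (0,1) and let F_τ^n(λ) be the backward-Euler CQ approximation of E_{α,1}(-λ t_n^α) with t_n = nτ. Then for every λ > 0 and n ≥ 1, |E_{α,1}(-λ t_n^α) − F_τ^n(λ)| ≤ c/(1 + λ t_n^α) · n^{-1}, where c is independent of λ, n, τ. -/

import Mathlib

/-- The one-parameter Mittag-Leffler function `E_{α,1}(z) = ∑_{k=0}^∞ z^k / Γ(kα+1)`. -/
noncomputable def mittagLeffler (α z : ℝ) : ℝ :=
  ∑' k : ℕ, z ^ k / Real.Gamma (k * α + 1)

/-- The backward Euler convolution quadrature weights `b_j = (-1)^j binom(α, j)`,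
with generating function `∑_j b_j ξ^j = (1-ξ)^α`. -/
noncomputable def cqWeight (α : ℝ) (j : ℕ) : ℝ :=
  (-1) ^ j * (∏ i ∈ Finset.range j, (α - i)) / (Nat.factorial j)

section CQHelpers

open Real Set Filter Topology MeasureTheory

/-- spectral density (log variable) -/
noncomputable def kk (α v : ℝ) : ℝ :=
  Real.sin (π * α) / π / (Real.exp (α * v) + 2 * Real.cos (π * α) + Real.exp (-(α * v)))

lemma sin_pos_aux {α : ℝ} (hα : α ∈ Set.Ioo (0 : ℝ) 1) : 0 < Real.sin (π * α) := by
  apply Real.sin_pos_of_pos_of_lt_pi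
  · exact mul_pos Real.pi_pos hα.1
  · nlinarith [Real.pi_pos, hα.2]

lemma den_lower1 (α v : ℝ) : Real.sin (π * α) ^ 2 * Real.exp (-(α * v)) ≤
    Real.exp (α * v) + 2 * Real.cos (π * α) + Real.exp (-(α * v)) := by
  have h1 : Real.exp (α * v) * Real.exp (-(α * v)) = 1 := by rw [← Real.exp_add]; simp
  have h2 := Real.sin_sq_add_cos_sq (π * α)
  set p := Real.exp (α * v)
  set q := Real.exp (-(α * v))
  have hq : 0 < q := Real.exp_pos _
  set c := Real.cos (π * α)
  have : p + 2 * c + q - Real.sin (π * α) ^ 2 * q = q * (p + c) ^ 2 := by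
    have : Real.sin (π * α) ^ 2 = 1 - c ^ 2 := by linarith
    rw [this]
    have e1 : q * (p + c) ^ 2 = (p * q) * p + 2 * c * (p * q) + q * c ^ 2 := by ring
    rw [e1, h1]; ring
  nlinarith [sq_nonneg (p + c), mul_nonneg hq.le (sq_nonneg (p + c))]

lemma den_lower2 (α v : ℝ) : Real.sin (π * α) ^ 2 * Real.exp (α * v) ≤
    Real.exp (α * v) + 2 * Real.cos (π * α) + Real.exp (-(α * v)) := by
  have := den_lower1 α (-v)
  simp only [mul_neg, neg_neg] at this
  linarith

lemma den_pos {α : ℝ} (hα : α ∈ Set.Ioo (0 : ℝ) 1) (v : ℝ) :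
    0 < Real.exp (α * v) + 2 * Real.cos (π * α) + Real.exp (-(α * v)) :=
  lt_of_lt_of_le (mul_pos (pow_pos (sin_pos_aux hα) 2) (Real.exp_pos _)) (den_lower1 α v)

lemma kk_nonneg {α : ℝ} (hα : α ∈ Set.Ioo (0 : ℝ) 1) (v : ℝ) : 0 ≤ kk α v :=
  div_nonneg (div_nonneg (sin_pos_aux hα).le Real.pi_pos.le) (den_pos hα v).le

lemma kk_le1 {α : ℝ} (hα : α ∈ Set.Ioo (0 : ℝ) 1) (v : ℝ) :
    kk α v ≤ (1 / (π * Real.sin (π * α))) * Real.exp (α * v) := by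
  have hs := sin_pos_aux hα
  have h0 := den_pos hα v
  have h1 := den_lower1 α v
  have h2 : Real.exp (α * v) * Real.exp (-(α * v)) = 1 := by rw [← Real.exp_add]; simp
  unfold kk
  rw [div_le_iff₀ h0]
  have : Real.sin (π * α) / π = 1 / (π * Real.sin (π * α)) * Real.exp (α * v) *
      (Real.sin (π * α) ^ 2 * Real.exp (-(α * v))) := by
    rw [show 1 / (π * Real.sin (π * α)) * Real.exp (α * v) *
      (Real.sin (π * α) ^ 2 * Real.exp (-(α * v))) = 1 / (π * Real.sin (π * α)) *
      Real.sin (π * α) ^ 2 * (Real.exp (α * v) * Real.exp (-(α * v))) by ring, h2]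
    field_simp
  rw [this]
  gcongr

lemma kk_neg (α v : ℝ) : kk α (-v) = kk α v := by
  unfold kk
  rw [mul_neg, neg_neg]; congr 1; ring

lemma kk_le2 {α : ℝ} (hα : α ∈ Set.Ioo (0 : ℝ) 1) (v : ℝ) :
    kk α v ≤ (1 / (π * Real.sin (π * α))) * Real.exp (-(α * v)) := by
  have := kk_le1 hα (-v)
  rwa [kk_neg, mul_neg] at this

lemma kk_cont {α : ℝ} (hα : α ∈ Set.Ioo (0 : ℝ) 1) : Continuous (kk α) := by
  unfold kk
  apply Continuous.div (by fun_prop) (by fun_prop)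
  intro v; exact (den_pos hα v).ne'

lemma integrable_of_two_exp {f : ℝ → ℝ} (hf : Continuous f) {a b C : ℝ} (ha : 0 < a) (hb : 0 < b)
    (h1 : ∀ v, |f v| ≤ C * Real.exp (a * v)) (h2 : ∀ v, |f v| ≤ C * Real.exp (-(b * v))) :
    Integrable f := by
  rw [← integrableOn_univ, ← Iic_union_Ioi (a := (0:ℝ))]
  apply IntegrableOn.union
  · have := (integrableOn_exp_mul_Iic ha 0).const_mul C
    refine Integrable.mono' this hf.aestronglyMeasurable ?_
    exact Eventually.of_forall h1
  · have := (integrableOn_exp_mul_Ioi (neg_lt_zero.mpr hb) 0).const_mul C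
    refine Integrable.mono' this hf.aestronglyMeasurable ?_
    refine Eventually.of_forall fun v => ?_
    simpa using h2 v

lemma kk_int {α : ℝ} (hα : α ∈ Set.Ioo (0 : ℝ) 1) : Integrable (kk α) := by
  apply integrable_of_two_exp (kk_cont hα) hα.1 hα.1
  · intro v; rw [abs_of_nonneg (kk_nonneg hα v)]; exact kk_le1 hα v
  · intro v; rw [abs_of_nonneg (kk_nonneg hα v)]; exact kk_le2 hα v

noncomputable def GG (α : ℝ) (w : ℂ) : ℂ := Complex.exp (α * w) / (Complex.exp (α * w) + 1)

lemma exp_add_one_ne {α : ℝ} (hα : α ∈ Set.Ioo (0 : ℝ) 1) {w : ℂ} (hw : |w.im| ≤ π) :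
    Complex.exp (α * w) + 1 ≠ 0 := by
  intro h
  have h1 : Complex.exp (α * w) = Complex.exp (π * Complex.I) := by
    rw [Complex.exp_pi_mul_I]; linear_combination h
  rw [Complex.exp_eq_exp_iff_exists_int] at h1
  obtain ⟨n, hn⟩ := h1
  have him := congrArg Complex.im hn
  simp at him
  have hpi := Real.pi_pos
  have h2 : |α * w.im| < π := by
    rw [abs_mul, abs_of_pos hα.1]
    nlinarith [hα.1, hα.2, abs_nonneg w.im]
  rw [him] at h2
  have h3 : π + n * (2 * π) = (1 + 2 * n) * π := by ring
  rw [h3, abs_mul, abs_of_pos hpi] at h2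
  have h4 : |(1 + 2 * (n:ℝ))| < 1 := by
    by_contra hc
    push Not at hc
    nlinarith
  have h5 : |(1 + 2 * n : ℤ)| < 1 := by exact_mod_cast h4
  rw [abs_lt] at h5
  omega

lemma exp_sub_ne {a : ℝ} {w : ℂ} (hw : |w.im| ≤ π) (hwa : w ≠ a) :
    Complex.exp w - Complex.exp a ≠ 0 := by
  intro h
  have h1 := sub_eq_zero.mp h
  rw [Complex.exp_eq_exp_iff_exists_int] at h1
  obtain ⟨n, hn⟩ := h1
  have him := congrArg Complex.im hn
  simp at him
  have hpi := Real.pi_pos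
  rw [him, abs_mul, abs_of_pos (by positivity : 0 < 2 * π)] at hw
  have h4 : |(n:ℝ)| < 1 := by
    by_contra hc
    push Not at hc
    nlinarith
  have h5 : |n| < 1 := by exact_mod_cast h4
  have h6 : n = 0 := by rw [abs_lt] at h5; omega
  apply hwa
  rw [hn, h6]; simp

noncomputable def QQ (α a : ℝ) (w : ℂ) : ℂ :=
  dslope (GG α) (a : ℂ) w / dslope Complex.exp (a : ℂ) w

lemma QQ_of_ne {α a : ℝ} {w : ℂ} (hwa : w ≠ a) :
    QQ α a w = (GG α w - GG α a) / (Complex.exp w - Complex.exp a) := by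
  unfold QQ
  rw [dslope_of_ne _ hwa, dslope_of_ne _ hwa, slope_def_field, slope_def_field]
  have : w - a ≠ 0 := sub_ne_zero.mpr hwa
  field_simp

lemma GG_diff {α : ℝ} (hα : α ∈ Set.Ioo (0 : ℝ) 1) {w : ℂ} (hw : |w.im| ≤ π) :
    DifferentiableAt ℂ (GG α) w := by
  unfold GG
  refine DifferentiableAt.fun_div (by fun_prop) (by fun_prop) ?_
  exact exp_add_one_ne hα hw

lemma dslope_exp_ne {a : ℝ} {w : ℂ} (hw : |w.im| ≤ π) : dslope Complex.exp (a : ℂ) w ≠ 0 := by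
  by_cases hwa : w = a
  · rw [hwa, dslope_same]; simp [Complex.exp_ne_zero]
  · rw [dslope_of_ne _ hwa, slope_def_field]
    exact div_ne_zero (exp_sub_ne hw hwa) (sub_ne_zero.mpr hwa)

lemma QQ_cont {α : ℝ} (hα : α ∈ Set.Ioo (0 : ℝ) 1) (a : ℝ) {w : ℂ} (hw : |w.im| ≤ π) :
    ContinuousAt (QQ α a) w := by
  unfold QQ
  apply ContinuousAt.div _ _ (dslope_exp_ne hw)
  · by_cases hwa : w = a
    · rw [hwa] at hw ⊢
      rw [continuousAt_dslope_same]; exact GG_diff hα hw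
    · rw [continuousAt_dslope_of_ne hwa]; exact (GG_diff hα hw).continuousAt
  · by_cases hwa : w = a
    · rw [hwa, continuousAt_dslope_same]; exact Complex.differentiableAt_exp
    · rw [continuousAt_dslope_of_ne hwa]; exact Complex.continuous_exp.continuousAt

lemma QQ_diff {α : ℝ} (hα : α ∈ Set.Ioo (0 : ℝ) 1) (a : ℝ) {w : ℂ} (hw : |w.im| ≤ π)
    (hwa : w ≠ a) : DifferentiableAt ℂ (QQ α a) w := by
  unfold QQ
  apply DifferentiableAt.div _ _ (dslope_exp_ne hw)
  · rw [differentiableAt_dslope_of_ne hwa]; exact GG_diff hα hw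
  · rw [differentiableAt_dslope_of_ne hwa]; exact Complex.differentiableAt_exp

lemma QQ_rect {α : ℝ} (hα : α ∈ Set.Ioo (0 : ℝ) 1) (a : ℝ) (R : ℝ) :
    (∫ x : ℝ in (-R)..R, QQ α a (x + (-π : ℝ) * Complex.I)) -
    (∫ x : ℝ in (-R)..R, QQ α a (x + (π : ℝ) * Complex.I)) +
      Complex.I • (∫ y : ℝ in (-π)..π, QQ α a ((R : ℝ) + y * Complex.I)) -
      Complex.I • (∫ y : ℝ in (-π)..π, QQ α a ((-R : ℝ) + y * Complex.I)) = 0 := by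
  have hpi := Real.pi_pos
  have := Complex.integral_boundary_rect_eq_zero_of_differentiable_on_off_countable (QQ α a)
    (⟨-R, -π⟩ : ℂ) (⟨R, π⟩ : ℂ) {(a : ℂ)} (countable_singleton _) ?_ ?_
  · exact this
  · intro w hw
    refine (QQ_cont hα a ?_).continuousWithinAt
    have h2 := hw.2
    simp only [mem_preimage] at h2
    rw [uIcc_of_le (by linarith), mem_Icc] at h2
    exact abs_le.mpr h2
  · rintro w ⟨hw, hwa⟩
    refine QQ_diff hα a ?_ hwa
    have h2 := hw.2
    simp only [mem_preimage] at h2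
    rw [min_eq_left (by linarith), max_eq_right (by linarith), mem_Ioo] at h2
    exact abs_le.mpr ⟨h2.1.le, h2.2.le⟩

lemma GG_jump {α : ℝ} (hα : α ∈ Set.Ioo (0 : ℝ) 1) (v : ℝ) :
    GG α (v + (π : ℝ) * Complex.I) - GG α (v + (-π : ℝ) * Complex.I) =
      2 * π * Complex.I * (kk α v : ℂ) := by
  have hpi := Real.pi_pos
  have n1 := exp_add_one_ne hα (w := v + (π : ℝ) * Complex.I) (by simp [abs_of_pos hpi])
  have n2 := exp_add_one_ne hα (w := v + (-π : ℝ) * Complex.I) (by simp [abs_of_pos hpi])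
  have hd : (Complex.exp (α * v) + 2 * Complex.cos (π * α) + Complex.exp (-(α * v))) ≠ 0 := by
    have := (den_pos hα v).ne'
    exact_mod_cast (Complex.ofReal_ne_zero.mpr this)
  unfold GG kk
  push_cast at *
  rw [show (α : ℂ) * (v + π * Complex.I) = α * v + (π * α) * Complex.I by ring] at *
  rw [show (α : ℂ) * (v + -π * Complex.I) = α * v + -((π * α) * Complex.I) by ring] at *
  rw [Complex.exp_add] at *
  rw [Complex.exp_add (α * v) (-((π * α) * Complex.I))] at *
  have hEE : Complex.exp (π * α * Complex.I) * Complex.exp (-(π * α * Complex.I)) = 1 := by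
    rw [← Complex.exp_add]; simp
  have hpq : Complex.exp (α * v) * Complex.exp (-(α * v)) = 1 := by
    rw [← Complex.exp_add]; simp
  have hcos : Complex.exp (π * α * Complex.I) + Complex.exp (-(π * α * Complex.I)) =
      2 * Complex.cos (π * α) := by rw [Complex.cos]; ring_nf
  have hsin : Complex.exp (π * α * Complex.I) - Complex.exp (-(π * α * Complex.I)) =
      2 * Complex.I * Complex.sin (π * α) := by
    rw [Complex.sin]
    ring_nf; simp; ring
  have hpi' : (π : ℂ) ≠ 0 := by exact_mod_cast hpi.ne'
  set E := Complex.exp (π * α * Complex.I)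
  set E' := Complex.exp (-(π * α * Complex.I))
  set p := Complex.exp (α * v)
  set q := Complex.exp (-(α * v))
  rw [div_sub_div _ _ n1 n2, show 2 * π * Complex.I * (Complex.sin (π * α) / π /
    (p + 2 * Complex.cos (π * α) + q)) = (2 * Complex.I * Complex.sin (π * α)) /
    (p + 2 * Complex.cos (π * α) + q) by field_simp, ← hsin, div_eq_div_iff (mul_ne_zero n1 n2) hd,
    ← hcos]
  linear_combination (E - E') * (- p ^ 2) * hEE + (E-E') * hpq

lemma QQ_intervalIntegrable {α : ℝ} (hα : α ∈ Set.Ioo (0 : ℝ) 1) (a R : ℝ) :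
    IntervalIntegrable (fun y : ℝ => QQ α a (R + y * Complex.I)) volume (-π) π := by
  apply ContinuousOn.intervalIntegrable
  intro y hy
  rw [uIcc_of_le (by linarith [Real.pi_pos]), mem_Icc] at hy
  apply ContinuousAt.continuousWithinAt
  have h1 : ContinuousAt (QQ α a) (R + y * Complex.I) :=
    QQ_cont hα a (by simpa using abs_le.mpr hy)
  exact ContinuousAt.comp (f := fun y : ℝ => (R + y * Complex.I : ℂ)) h1 (by fun_prop)

lemma norm_exp_al (α R y : ℝ) :
    ‖Complex.exp (α * (R + y * Complex.I))‖ = Real.exp (α * R) := by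
  rw [Complex.norm_exp]; simp

lemma norm_exp_w (R y : ℝ) :
    ‖Complex.exp (R + y * Complex.I)‖ = Real.exp R := by
  rw [Complex.norm_exp]; simp

lemma norm_exp_a (a : ℝ) : ‖Complex.exp (a : ℂ)‖ = Real.exp a := by
  rw [Complex.norm_exp]; simp

lemma right_lim {α : ℝ} (hα : α ∈ Set.Ioo (0 : ℝ) 1) (a : ℝ) :
    Tendsto (fun R : ℝ => ∫ y : ℝ in (-π)..π, QQ α a (R + y * Complex.I)) atTop (𝓝 0) := by
  have hlim : Tendsto (fun R : ℝ => (2 + ‖GG α a‖) / (Real.exp R - Real.exp a) * |π - -π|) atTop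
      (𝓝 0) := by
    have h1 : Tendsto (fun R : ℝ => Real.exp R - Real.exp a) atTop atTop :=
      tendsto_atTop_add_const_right _ _ Real.tendsto_exp_atTop
    have := (h1.const_div_atTop (2 + ‖GG α a‖)).mul_const |π - -π|
    simpa using this
  refine squeeze_zero_norm' ?_ hlim
  have e1 : ∀ᶠ R : ℝ in atTop, 2 ≤ Real.exp (α * R) :=
    (Real.tendsto_exp_atTop.comp (tendsto_id.const_mul_atTop hα.1)).eventually_ge_atTop 2
  filter_upwards [e1, eventually_gt_atTop a] with R h2 hRa
  have hlt : Real.exp a < Real.exp R := Real.exp_lt_exp.mpr hRa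
  apply intervalIntegral.norm_integral_le_of_norm_le_const
  intro y hy
  have hne : (R + y * Complex.I : ℂ) ≠ a := by
    intro h
    have := congrArg Complex.re h
    simp at this
    linarith
  rw [QQ_of_ne hne, norm_div]
  have hG : ‖GG α (R + y * Complex.I)‖ ≤ 2 := by
    unfold GG
    have hn := norm_exp_al α R y
    have h3 : Real.exp (α * R) - 1 ≤ ‖Complex.exp (α * (R + y * Complex.I)) + 1‖ := by
      have := norm_sub_norm_le (Complex.exp (α * (R + y * Complex.I))) (-1)
      rw [hn] at this
      simpa using this
    rw [norm_div, hn, div_le_iff₀ (by linarith)]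
    linarith
  apply div_le_div₀ (by positivity) _ (by linarith)
  · have := norm_sub_norm_le (Complex.exp (R + y * Complex.I)) (Complex.exp a)
    rwa [norm_exp_w, norm_exp_a] at this
  · exact (norm_sub_le _ _).trans (by linarith)

lemma left_lim {α : ℝ} (hα : α ∈ Set.Ioo (0 : ℝ) 1) (a : ℝ) :
    Tendsto (fun R : ℝ => ∫ y : ℝ in (-π)..π, QQ α a ((-R : ℝ) + y * Complex.I)) atTop
      (𝓝 (2 * π * (GG α a / Complex.exp a))) := by
  have hc : (2 * π * (GG α a / Complex.exp a) : ℂ) = ∫ y : ℝ in (-π)..π, GG α a / Complex.exp a := by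
    rw [intervalIntegral.integral_const]
    rw [Complex.real_smul]; push_cast; ring
  rw [hc, tendsto_iff_norm_sub_tendsto_zero]
  have hm : Tendsto (fun R : ℝ => Real.exp (-R)) atTop (𝓝 0) :=
    Real.tendsto_exp_neg_atTop_nhds_zero
  have hm2 : Tendsto (fun R : ℝ => Real.exp (α * -R)) atTop (𝓝 0) := by
    have : Tendsto (fun R : ℝ => α * R) atTop atTop := tendsto_id.const_mul_atTop hα.1
    refine (hm.comp this).congr fun R => ?_
    simp [Function.comp]
  have hlim : Tendsto (fun R : ℝ => (2 * Real.exp (α * -R) * Real.exp a + ‖GG α a‖ * Real.exp (-R)) /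
      ((Real.exp a - Real.exp (-R)) * Real.exp a) * |π - -π|) atTop
      (𝓝 0) := by
    have h1 : Tendsto (fun R : ℝ => 2 * Real.exp (α * -R) * Real.exp a + ‖GG α a‖ * Real.exp (-R))
        atTop (𝓝 (2 * 0 * Real.exp a + ‖GG α a‖ * 0)) :=
      ((hm2.const_mul 2).mul_const _).add (hm.const_mul _)
    have h2 : Tendsto (fun R : ℝ => (Real.exp a - Real.exp (-R)) * Real.exp a) atTop
       (𝓝 ((Real.exp a - 0) * Real.exp a)) := (tendsto_const_nhds.sub hm).mul_const _
    have := (h1.div h2 (by simp [Real.exp_ne_zero])).mul_const |π - -π|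
    simpa using this
  refine squeeze_zero_norm' ?_ hlim
  have e1 : ∀ᶠ R : ℝ in atTop, Real.exp (α * -R) < 1 / 2 := hm2.eventually_lt_const (by norm_num)
  have e2 : ∀ᶠ R : ℝ in atTop, Real.exp (-R) < Real.exp a := hm.eventually_lt_const (Real.exp_pos _)
  filter_upwards [e1, e2] with R h2 hlt
  rw [norm_norm, ← intervalIntegral.integral_sub (QQ_intervalIntegrable hα a (-R))
    (_root_.intervalIntegrable_const)]
  apply intervalIntegral.norm_integral_le_of_norm_le_const
  intro y hy
  have hRa := Real.exp_lt_exp.mp hlt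
  have hne : ((-R : ℝ) + y * Complex.I : ℂ) ≠ a := by
    intro h
    have := congrArg Complex.re h
    simp at this
    linarith
  have hG : ‖GG α ((-R : ℝ) + y * Complex.I)‖ ≤ 2 * Real.exp (α * -R) := by
    unfold GG
    have hn := norm_exp_al α (-R) y
    have h3 : 1 - Real.exp (α * -R) ≤ ‖Complex.exp (α * ((-R : ℝ) + y * Complex.I)) + 1‖ := by
      have := norm_sub_norm_le 1 (-Complex.exp (α * ((-R : ℝ) + y * Complex.I)))
      rwa [norm_neg, hn, norm_one, sub_neg_eq_add, add_comm 1] at this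
    rw [norm_div, hn, div_le_iff₀ (by linarith)]
    nlinarith [Real.exp_pos (α * -R)]
  have hd : Real.exp a - Real.exp (-R) ≤
      ‖Complex.exp ((-R : ℝ) + y * Complex.I) - Complex.exp a‖ := by
    have := norm_sub_norm_le (Complex.exp a) (Complex.exp ((-R : ℝ) + y * Complex.I))
    rwa [norm_exp_w, norm_exp_a, norm_sub_rev] at this
  have hdn : Complex.exp ((-R : ℝ) + y * Complex.I) - Complex.exp a ≠ 0 := by
    rw [← norm_pos_iff]; linarith
  have hid : QQ α a ((-R : ℝ) + y * Complex.I) - GG α a / Complex.exp a =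
    (GG α ((-R : ℝ) + y * Complex.I) * Complex.exp a
      - GG α a * Complex.exp ((-R : ℝ) + y * Complex.I)) /
     ((Complex.exp ((-R : ℝ) + y * Complex.I) - Complex.exp a) * Complex.exp a) := by
    rw [QQ_of_ne hne, div_sub_div _ _ hdn (Complex.exp_ne_zero _)]
    congr 1
    ring
  rw [hid, norm_div]
  apply div_le_div₀ (by positivity) _ (mul_pos (by linarith) (Real.exp_pos _))
  · rw [norm_mul, norm_exp_a]
    gcongr
  · refine (norm_sub_le _ _).trans ?_
    rw [norm_mul, norm_mul, norm_exp_a, norm_exp_w]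
    gcongr

lemma stieltjes_int {α : ℝ} (hα : α ∈ Set.Ioo (0 : ℝ) 1) {s : ℝ} (hs : 0 < s) :
    Integrable (fun v => kk α v / (Real.exp v + s)) := by
  refine Integrable.mono' ((kk_int hα).mul_const s⁻¹) ?_ ?_
  · exact (Continuous.div (kk_cont hα) (by fun_prop)
      (fun v => by have := Real.exp_pos v; positivity)).aestronglyMeasurable
  · refine Eventually.of_forall fun v => ?_
    have := Real.exp_pos v
    have hk := kk_nonneg hα v
    rw [Real.norm_of_nonneg (by positivity), ← div_eq_mul_inv]
    gcongr
    linarith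

lemma stieltjes {α : ℝ} (hα : α ∈ Set.Ioo (0 : ℝ) 1) (a : ℝ) :
    ∫ v : ℝ, kk α v / (Real.exp v + Real.exp a) =
      Real.exp (α * a) / (Real.exp (α * a) + 1) / Real.exp a := by
  have hpi := Real.pi_pos
  have hInteg := stieltjes_int hα (Real.exp_pos a)
  have key : ∀ R : ℝ, (∫ x : ℝ in (-R)..R, QQ α a (x + (-π : ℝ) * Complex.I)) -
    (∫ x : ℝ in (-R)..R, QQ α a (x + (π : ℝ) * Complex.I)) =
      2 * π * Complex.I * ((∫ v in (-R)..R, kk α v / (Real.exp v + Real.exp a) : ℝ) : ℂ) := by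
    intro R
    have hcont : ∀ p : ℝ, |p| ≤ π →
        Continuous (fun x : ℝ => QQ α a (x + (p : ℝ) * Complex.I)) := by
      intro p hp
      rw [continuous_iff_continuousAt]
      intro x
      have h1 : ContinuousAt (QQ α a) (x + p * Complex.I) :=
        QQ_cont hα a (by simpa using hp)
      exact ContinuousAt.comp (f := fun x : ℝ => (x + p * Complex.I : ℂ)) h1 (by fun_prop)
    rw [← intervalIntegral.integral_sub
      ((hcont (-π) (by simp [abs_of_pos hpi])).intervalIntegrable _ _)
      ((hcont π (by simp [abs_of_pos hpi])).intervalIntegrable _ _),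
      ← intervalIntegral.integral_ofReal, ← intervalIntegral.integral_const_mul]
    apply intervalIntegral.integral_congr
    intro v _
    have ne : ∀ p : ℝ, p ≠ 0 → (v + p * Complex.I : ℂ) ≠ a := by
      intro p hp h
      have := congrArg Complex.im h
      simp at this
      exact hp this
    have hj := GG_jump hα v
    simp only
    rw [QQ_of_ne (ne _ (by linarith)), QQ_of_ne (ne _ (by linarith))]
    have x1 : Complex.exp (v + (-π : ℝ) * Complex.I) = - Complex.exp v := by
      rw [Complex.exp_add]; push_cast
      rw [neg_mul, Complex.exp_neg, Complex.exp_pi_mul_I]; norm_num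
    have x2 : Complex.exp (v + (π : ℝ) * Complex.I) = - Complex.exp v := by
      rw [Complex.exp_add, Complex.exp_pi_mul_I]; norm_num
    rw [x1, x2, div_sub_div_same, sub_sub_sub_cancel_right]
    have : GG α (v + (-π : ℝ) * Complex.I) - GG α (v + (π : ℝ) * Complex.I) =
       - (2 * π * Complex.I * (kk α v : ℂ)) := by rw [← hj]; ring
    rw [this]
    push_cast
    rw [show -Complex.exp v - Complex.exp a = -(Complex.exp v + Complex.exp a) by ring, neg_div_neg_eq]
    ring
  have hl1 : Tendsto (fun R : ℝ => ∫ v in (-R)..R, kk α v / (Real.exp v + Real.exp a)) atTop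
     (𝓝 (∫ v : ℝ, kk α v / (Real.exp v + Real.exp a))) :=
    intervalIntegral_tendsto_integral hInteg tendsto_neg_atTop_atBot tendsto_id
  have hl2 : Tendsto (fun R : ℝ => 2 * π * Complex.I *
      ((∫ v in (-R)..R, kk α v / (Real.exp v + Real.exp a) : ℝ) : ℂ)) atTop
     (𝓝 (2 * π * Complex.I * ((∫ v : ℝ, kk α v / (Real.exp v + Real.exp a) : ℝ) : ℂ))) :=
    ((Complex.continuous_ofReal.tendsto _).comp hl1).const_mul _
  have hl3 := (hl2.add ((right_lim hα a).const_smul Complex.I)).sub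
    ((left_lim hα a).const_smul Complex.I)
  have hz : ∀ R : ℝ, 2 * π * Complex.I *
      ((∫ v in (-R)..R, kk α v / (Real.exp v + Real.exp a) : ℝ) : ℂ) +
      Complex.I • (∫ y : ℝ in (-π)..π, QQ α a ((R : ℝ) + y * Complex.I)) -
      Complex.I • (∫ y : ℝ in (-π)..π, QQ α a ((-R : ℝ) + y * Complex.I)) = 0 := by
    intro R
    rw [← key]; exact QQ_rect hα a R
  have hz2 := tendsto_nhds_unique hl3 ((tendsto_congr hz).mpr tendsto_const_nhds)
  have hpi' : (2 * π * Complex.I : ℂ) ≠ 0 := by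
    simp [hpi.ne']
  have : ((∫ v : ℝ, kk α v / (Real.exp v + Real.exp a) : ℝ) : ℂ) = GG α a / Complex.exp a := by
    apply mul_left_cancel₀ hpi'
    simp only [smul_eq_mul] at hz2
    linear_combination hz2
  unfold GG at this
  exact_mod_cast this

lemma laplace_unique {d : ℝ → ℝ} (hc : ContinuousOn d (Ici 0)) {M : ℝ}
    (hb : ∀ t, 0 ≤ t → |d t| ≤ M)
    (hm : ∀ m : ℕ, ∫ t in Ioi (0:ℝ), Real.exp (-((m + 1 : ℝ) * t)) * d t = 0) :
    ∀ t, 0 < t → d t = 0 := by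
  have hM : 0 ≤ M := (abs_nonneg _).trans (hb 0 le_rfl)
  have hdm : AEStronglyMeasurable d (volume.restrict (Ioi 0)) :=
    (hc.mono Ioi_subset_Ici_self).aestronglyMeasurable measurableSet_Ioi
  have hexp : IntegrableOn (fun t : ℝ => Real.exp (-t)) (Ioi 0) := by
    simpa using integrableOn_exp_mul_Ioi (show (-1:ℝ) < 0 by norm_num) 0
  have hI1 : ∫ t in Ioi (0:ℝ), Real.exp (-t) = 1 := integral_exp_neg_Ioi_zero
  -- integrability against bounded continuous weights
  have hInteg : ∀ g : ℝ → ℝ, ContinuousOn g (Ioi 0) → ∀ B, (∀ t, 0 < t → |g t| ≤ B) →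
      IntegrableOn (fun t => Real.exp (-t) * g t * d t) (Ioi 0) := by
    intro g hg B hB
    refine Integrable.mono' (hexp.mul_const (B * M)) ?_ ?_
    · exact ((by fun_prop : Continuous fun t : ℝ => Real.exp (-t)).aestronglyMeasurable.mul
        (hg.aestronglyMeasurable measurableSet_Ioi)).mul hdm
    · filter_upwards [ae_restrict_mem measurableSet_Ioi] with t ht
      have ht' : 0 < t := ht
      have h1 := hB t ht'
      have h2 := hb t ht'.le
      rw [norm_mul, norm_mul, Real.norm_of_nonneg (Real.exp_pos _).le, Real.norm_eq_abs,
        Real.norm_eq_abs, mul_assoc]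
      gcongr
      exact (abs_nonneg _).trans h1
  set φ : ℝ → ℝ := fun y => y * d (-Real.log y) with hφ
  have hφc : ContinuousOn φ (Icc 0 1) := by
    intro y hy
    rcases eq_or_lt_of_le hy.1 with h0 | h0
    · subst h0
      have : Tendsto φ (𝓝[Icc 0 1] 0) (𝓝 0) := by
        refine squeeze_zero_norm' (a := fun y => M * |y|) ?_ ?_
        · filter_upwards [self_mem_nhdsWithin] with y hy
          have := hb (-Real.log y) (by
            have := Real.log_nonpos hy.1 hy.2; linarith)
          rw [hφ]; simp only [norm_mul, Real.norm_eq_abs]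
          rw [mul_comm]
          gcongr
        · have : Continuous fun y : ℝ => M * |y| := by fun_prop
          have h := (this.tendsto 0).mono_left (nhdsWithin_le_nhds (s := Icc 0 1))
          simpa using h
      have h00 : φ 0 = 0 := by simp [hφ]
      unfold ContinuousWithinAt
      rwa [h00]
    · refine ContinuousWithinAt.mul continuousWithinAt_id ?_
      have h1 : ContinuousWithinAt d (Ici 0) (-Real.log y) :=
        hc _ (by have := Real.log_nonpos hy.1 hy.2; simp only [mem_Ici]; linarith)
      refine ContinuousWithinAt.comp (t := Ici 0) (f := fun y => -Real.log y) h1 ?_ ?_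
      · exact (Real.continuousAt_log h0.ne').neg.continuousWithinAt
      · intro z hz
        have := Real.log_nonpos hz.1 hz.2; simp only [mem_Ici]; linarith
  have hpoly : ∀ p : Polynomial ℝ,
      ∫ t in Ioi (0:ℝ), Real.exp (-t) * p.eval (Real.exp (-t)) * d t = 0 := by
    intro p
    have : ∀ t : ℝ, Real.exp (-t) * p.eval (Real.exp (-t)) * d t =
        ∑ i ∈ Finset.range (p.natDegree + 1),
          p.coeff i * (Real.exp (-((i + 1 : ℝ) * t)) * d t) := by
      intro t
      rw [Polynomial.eval_eq_sum_range, Finset.mul_sum, Finset.sum_mul]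
      refine Finset.sum_congr rfl fun i _ => ?_
      rw [show -((i + 1 : ℝ) * t) = -t + i * (-t) by ring, Real.exp_add, Real.exp_nat_mul]
      ring
    simp_rw [this]
    rw [integral_finsetSum]
    · refine Finset.sum_eq_zero fun i _ => ?_
      rw [integral_const_mul, hm i, mul_zero]
    · intro i _
      apply Integrable.const_mul
      have := hInteg (fun t => Real.exp (i * (-t))) (by fun_prop) 1 (by
        intro t ht
        rw [abs_of_pos (Real.exp_pos _), Real.exp_le_one_iff]
        have : (0:ℝ) ≤ i := by positivity
        nlinarith)
      refine this.congr (Eventually.of_forall fun t => ?_)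
      simp only
      rw [← Real.exp_add]
      congr 2
      ring
  have hφe : ∀ t : ℝ, φ (Real.exp (-t)) = Real.exp (-t) * d t := by
    intro t; simp [hφ]
  have hφint : IntegrableOn (fun t => Real.exp (-t) * φ (Real.exp (-t)) * d t) (Ioi 0) := by
    apply hInteg _ _ M
    · intro t ht
      rw [hφe, abs_mul, abs_of_pos (Real.exp_pos _)]
      have h1 : Real.exp (-t) ≤ 1 := by rw [Real.exp_le_one_iff]; linarith
      have h2 := hb t ht.le
      nlinarith [abs_nonneg (d t)]
    · simp_rw [hφe]
      exact ContinuousOn.mul (by fun_prop) (hc.mono Ioi_subset_Ici_self)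
  have hJ : ∀ ε > 0, |∫ t in Ioi (0:ℝ), Real.exp (-t) * φ (Real.exp (-t)) * d t| ≤ ε * M := by
    intro ε hε
    obtain ⟨p, hp⟩ := exists_polynomial_near_of_continuousOn 0 1 φ hφc ε hε
    have hpint : IntegrableOn (fun t => Real.exp (-t) * p.eval (Real.exp (-t)) * d t) (Ioi 0) := by
      have hpc : ContinuousOn (fun x => p.eval x) (Icc 0 1) := by fun_prop
      obtain ⟨B, hB⟩ := isCompact_Icc.exists_bound_of_continuousOn hpc
      apply hInteg _ _ B
      · intro t ht
        exact hB _ ⟨(Real.exp_pos _).le, by rw [Real.exp_le_one_iff]; linarith⟩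
      · fun_prop
    have e1 : ∫ t in Ioi (0:ℝ), Real.exp (-t) * φ (Real.exp (-t)) * d t =
        ∫ t in Ioi (0:ℝ), (Real.exp (-t) * φ (Real.exp (-t)) * d t
          - Real.exp (-t) * p.eval (Real.exp (-t)) * d t) := by
      rw [integral_sub hφint hpint, hpoly p, sub_zero]
    rw [e1]
    have e2 : ∫ t in Ioi (0:ℝ), Real.exp (-t) * (ε * M) = ε * M := by
      rw [integral_mul_const, hI1, one_mul]
    rw [← e2, ← Real.norm_eq_abs]
    apply norm_integral_le_of_norm_le (hexp.mul_const _)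
    filter_upwards [ae_restrict_mem measurableSet_Ioi] with t ht
    have ht' : 0 < t := ht
    have h1 := hp (Real.exp (-t)) ⟨(Real.exp_pos _).le, by rw [Real.exp_le_one_iff]; linarith⟩
    have h2 := hb t ht'.le
    rw [← sub_mul, ← mul_sub, norm_mul, norm_mul, Real.norm_of_nonneg (Real.exp_pos _).le,
      Real.norm_eq_abs, Real.norm_eq_abs, mul_assoc, abs_sub_comm]
    gcongr
  have hJ0 : ∫ t in Ioi (0:ℝ), Real.exp (-t) * φ (Real.exp (-t)) * d t = 0 := by
    by_contra hne
    have hpos : 0 < |∫ t in Ioi (0:ℝ), Real.exp (-t) * φ (Real.exp (-t)) * d t| := abs_pos.mpr hne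
    set J := |∫ t in Ioi (0:ℝ), Real.exp (-t) * φ (Real.exp (-t)) * d t|
    have h := hJ (J / (2 * (M + 1))) (by positivity)
    have h2 : J / (2 * (M + 1)) * M < J := by
      rw [div_mul_eq_mul_div, div_lt_iff₀ (by positivity)]
      nlinarith
    linarith
  rw [setIntegral_eq_zero_iff_of_nonneg_ae] at hJ0
  · have hae : (fun t => Real.exp (-t) * φ (Real.exp (-t)) * d t) =ᵐ[volume.restrict (Ioi 0)]
      (fun _ => (0:ℝ)) := hJ0
    have := Measure.eqOn_open_of_ae_eq hae isOpen_Ioi (by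
      simp_rw [hφe]
      have := hc.mono (Ioi_subset_Ici_self (a := (0:ℝ)))
      fun_prop) continuousOn_const
    intro t ht
    have h := this ht
    simp only [hφe] at h
    have he := (Real.exp_pos (-t)).ne'
    simpa [he] using h
  · refine Eventually.of_forall fun t => ?_
    simp only [hφe, Pi.zero_apply]
    have : Real.exp (-t) * (Real.exp (-t) * d t) * d t = (Real.exp (-t) * d t) ^ 2 := by ring
    rw [this]; positivity
  · exact hφint

lemma gamma_lower {x T : ℝ} (hx : 0 ≤ x) (hT : 0 < T) :
    T ^ x * Real.exp (-T) ≤ Real.Gamma (x + 1) := by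
  rw [Real.Gamma_eq_integral (by linarith)]
  have h1 : T ^ x * Real.exp (-T) = ∫ t in Ioi T, Real.exp (-t) * T ^ x := by
    rw [integral_mul_const, integral_exp_neg_Ioi, mul_comm]
  have hI := Real.GammaIntegral_convergent (s := x + 1) (by linarith)
  rw [h1]
  have hsub : Ioi T ⊆ Ioi (0:ℝ) := Ioi_subset_Ioi hT.le
  refine le_trans ?_ (setIntegral_mono_set hI ?_ hsub.eventuallyLE)
  · refine setIntegral_mono_on ?_ (hI.mono_set hsub) measurableSet_Ioi ?_
    · have : IntegrableOn (fun t : ℝ => Real.exp (-t)) (Ioi T) := by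
        simpa using integrableOn_exp_mul_Ioi (show (-1:ℝ) < 0 by norm_num) T
      exact this.mul_const _
    · intro t ht
      have : T < t := ht
      rw [add_sub_cancel_right]
      gcongr
  · filter_upwards [ae_restrict_mem measurableSet_Ioi] with t ht
    have : (0:ℝ) < t := ht
    simp only [Pi.zero_apply]
    positivity

lemma ml_term_le {α : ℝ} (hα : α ∈ Set.Ioo (0 : ℝ) 1) {t : ℝ} (ht : 0 < t) (k : ℕ) :
    (t ^ α) ^ k / Real.Gamma (k * α + 1) ≤ Real.exp (2 * t) * ((2:ℝ) ^ (-α)) ^ k := by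
  have hk : 0 ≤ (k:ℝ) * α := mul_nonneg (by positivity) hα.1.le
  have h := gamma_lower hk (show 0 < 2 * t by positivity)
  have hG : 0 < Real.Gamma (k * α + 1) := Real.Gamma_pos_of_pos (by linarith)
  rw [div_le_iff₀ hG]
  have e1 : (2 * t) ^ ((k:ℝ) * α) = ((2:ℝ) ^ α) ^ k * (t ^ α) ^ k := by
    rw [mul_comm (k:ℝ), Real.rpow_mul (by positivity), Real.rpow_natCast,
      Real.mul_rpow (by norm_num) ht.le, mul_pow]
  have e2 : ((2:ℝ) ^ (-α)) ^ k * ((2:ℝ) ^ α) ^ k = 1 := by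
    rw [← mul_pow, ← Real.rpow_add (by norm_num)]; simp
  have e3 : Real.exp (2 * t) * Real.exp (-(2 * t)) = 1 := by rw [← Real.exp_add]; simp
  calc (t ^ α) ^ k = Real.exp (2 * t) * ((2:ℝ) ^ (-α)) ^ k *
        ((2 * t) ^ ((k:ℝ) * α) * Real.exp (-(2 * t))) := by
        rw [e1]
        linear_combination (-(t ^ α) ^ k) * e2 -
          (t ^ α) ^ k * (((2:ℝ) ^ (-α)) ^ k * ((2:ℝ) ^ α) ^ k) * e3
    _ ≤ _ := by gcongr

lemma two_rpow_lt {α : ℝ} (hα : α ∈ Set.Ioo (0 : ℝ) 1) : (2:ℝ) ^ (-α) < 1 :=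
  Real.rpow_lt_one_of_one_lt_of_neg (by norm_num) (by linarith [hα.1])

lemma ml_summable {α : ℝ} (hα : α ∈ Set.Ioo (0 : ℝ) 1) {R : ℝ} (hR : 0 < R) :
    Summable (fun k : ℕ => R ^ k / Real.Gamma (k * α + 1)) := by
  have hs : Summable (fun k : ℕ => Real.exp (2 * R ^ (1 / α)) * ((2:ℝ) ^ (-α)) ^ k) :=
    (summable_geometric_of_lt_one (by positivity) (two_rpow_lt hα)).mul_left _
  refine Summable.of_nonneg_of_le (fun k => ?_) (fun k => ?_) hs
  · have hk : 0 ≤ (k:ℝ) * α := mul_nonneg (by positivity) hα.1.le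
    have hG : 0 < Real.Gamma (k * α + 1) := Real.Gamma_pos_of_pos (by linarith)
    positivity
  · have := ml_term_le hα (t := R ^ (1 / α)) (by positivity) k
    rwa [← Real.rpow_mul hR.le, one_div_mul_cancel hα.1.ne', Real.rpow_one] at this

lemma ml_gamma_pos {α : ℝ} (hα : α ∈ Set.Ioo (0 : ℝ) 1) (k : ℕ) :
    0 < Real.Gamma (k * α + 1) := by
  have hk : 0 ≤ (k:ℝ) * α := mul_nonneg (by positivity) hα.1.le
  exact Real.Gamma_pos_of_pos (by linarith)

lemma ml_continuous {α : ℝ} (hα : α ∈ Set.Ioo (0 : ℝ) 1) : Continuous (mittagLeffler α) := by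
  rw [continuous_iff_continuousAt]
  intro z
  have h : ContinuousOn (mittagLeffler α) (Metric.ball 0 (|z| + 1)) := by
    unfold mittagLeffler
    refine continuousOn_tsum (fun k => by fun_prop)
      (ml_summable hα (R := |z| + 1) (by positivity)) ?_
    intro k y hy
    have hG := ml_gamma_pos hα k
    rw [norm_div, norm_pow, Real.norm_of_nonneg hG.le]
    gcongr
    simpa using (mem_ball_zero_iff.mp hy).le
  exact h.continuousAt (Metric.isOpen_ball.mem_nhds (by simp))

lemma ml_bound {α : ℝ} (hα : α ∈ Set.Ioo (0 : ℝ) 1) {t : ℝ} (ht : 0 < t) :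
    |mittagLeffler α (-(t ^ α))| ≤ Real.exp (2 * t) * (1 - (2:ℝ) ^ (-α))⁻¹ := by
  have hs : HasSum (fun k : ℕ => Real.exp (2 * t) * ((2:ℝ) ^ (-α)) ^ k)
      (Real.exp (2 * t) * (1 - (2:ℝ) ^ (-α))⁻¹) :=
    (hasSum_geometric_of_lt_one (by positivity) (two_rpow_lt hα)).mul_left _
  unfold mittagLeffler
  rw [← Real.norm_eq_abs]
  refine tsum_of_norm_bounded hs fun k => ?_
  have hG := ml_gamma_pos hα k
  rw [norm_div, norm_pow, norm_neg, Real.norm_of_nonneg hG.le, Real.norm_of_nonneg (by positivity)]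
  exact ml_term_le hα ht k

lemma ml_laplace {α : ℝ} (hα : α ∈ Set.Ioo (0 : ℝ) 1) {s : ℝ} (hs : 1 < s) :
    ∫ t in Ioi (0:ℝ), Real.exp (-(s * t)) * mittagLeffler α (-(t ^ α)) =
      s⁻¹ * (1 + s ^ (-α))⁻¹ := by
  have hs0 : 0 < s := by linarith
  set F : ℕ → ℝ → ℝ := fun k t =>
    Real.exp (-(s * t)) * ((-(t ^ α)) ^ k / Real.Gamma (k * α + 1)) with hF
  have hterm : ∀ k : ℕ, ∀ t ∈ Ioi (0:ℝ), F k t =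
      (-1) ^ k / Real.Gamma (k * α + 1) * (t ^ ((k * α + 1) - 1) * Real.exp (-(s * t))) := by
    intro k t ht
    have ht' : (0:ℝ) < t := ht
    simp only [hF]
    rw [add_sub_cancel_right, mul_comm (k:ℝ) α, Real.rpow_mul ht'.le, Real.rpow_natCast, neg_pow]
    ring
  have hbase : ∀ k : ℕ, ∫ t in Ioi (0:ℝ), t ^ (((k:ℝ) * α + 1) - 1) * Real.exp (-(s * t)) =
      s⁻¹ * (s ^ (-α)) ^ k * Real.Gamma (k * α + 1) := by
    intro k
    have hk : 0 ≤ (k:ℝ) * α := mul_nonneg (by positivity) hα.1.le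
    rw [Real.integral_rpow_mul_exp_neg_mul_Ioi (by linarith) hs0]
    congr 1
    rw [one_div, Real.inv_rpow hs0.le, Real.rpow_add hs0, Real.rpow_one, mul_inv, mul_comm,
      mul_comm (k:ℝ), Real.rpow_mul hs0.le, Real.rpow_natCast, Real.rpow_neg hs0.le, inv_pow]
  have hbaseint : ∀ k : ℕ, IntegrableOn
      (fun t : ℝ => t ^ (((k:ℝ) * α + 1) - 1) * Real.exp (-(s * t))) (Ioi 0) := by
    intro k
    have hk : 0 ≤ (k:ℝ) * α := mul_nonneg (by positivity) hα.1.le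
    have := integrableOn_rpow_mul_exp_neg_mul_rpow (p := 1) (s := ((k:ℝ) * α + 1) - 1) (b := s)
      (by linarith) (by norm_num) hs0
    simpa using this
  have hFint : ∀ k, IntegrableOn (F k) (Ioi 0) := by
    intro k
    refine IntegrableOn.congr_fun ((hbaseint k).const_mul ((-1) ^ k / Real.Gamma (k * α + 1))) ?_
      measurableSet_Ioi
    intro t ht
    exact (hterm k t ht).symm
  have hval : ∀ k, ∫ t in Ioi (0:ℝ), F k t = s⁻¹ * (-(s ^ (-α))) ^ k := by
    intro k
    rw [setIntegral_congr_fun measurableSet_Ioi (hterm k), integral_const_mul, hbase k,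
      neg_pow (s ^ (-α))]
    have := (ml_gamma_pos hα k).ne'
    field_simp
  have hnorm : ∀ k, ∫ t in Ioi (0:ℝ), ‖F k t‖ = s⁻¹ * (s ^ (-α)) ^ k := by
    intro k
    have : ∀ t ∈ Ioi (0:ℝ), ‖F k t‖ =
      1 / Real.Gamma (k * α + 1) * (t ^ ((k * α + 1) - 1) * Real.exp (-(s * t))) := by
      intro t ht
      have ht' : (0:ℝ) < t := ht
      rw [hterm k t ht, norm_mul, norm_div, norm_pow, norm_neg, norm_one, one_pow,
        Real.norm_of_nonneg (ml_gamma_pos hα k).le, Real.norm_of_nonneg (by positivity)]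
    rw [setIntegral_congr_fun measurableSet_Ioi this, integral_const_mul, hbase k]
    have := (ml_gamma_pos hα k).ne'
    field_simp
  have hlt : s ^ (-α) < 1 := Real.rpow_lt_one_of_one_lt_of_neg hs (by linarith [hα.1])
  have hpos : 0 < s ^ (-α) := by positivity
  have hsum := hasSum_integral_of_summable_integral_norm hFint (by
    simp_rw [hnorm]
    exact (summable_geometric_of_lt_one hpos.le hlt).mul_left _)
  simp_rw [hval] at hsum
  have h2 : HasSum (fun k : ℕ => s⁻¹ * (-(s ^ (-α))) ^ k) (s⁻¹ * (1 + s ^ (-α))⁻¹) := by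
    have := (hasSum_geometric_of_abs_lt_one (r := -(s ^ (-α))) (by
      rw [abs_neg, abs_of_pos hpos]; exact hlt)).mul_left s⁻¹
    simpa using this
  rw [← hsum.unique h2]
  apply setIntegral_congr_fun measurableSet_Ioi
  intro t _
  simp only [hF, mittagLeffler]
  rw [tsum_mul_left]

noncomputable def hh (α t : ℝ) : ℝ := ∫ v, Real.exp (-(t * Real.exp v)) * kk α v

lemma hh_dom {α : ℝ} (hα : α ∈ Set.Ioo (0 : ℝ) 1) {t : ℝ} (ht : 0 ≤ t) (v : ℝ) :
    ‖Real.exp (-(t * Real.exp v)) * kk α v‖ ≤ kk α v := by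
  have hk := kk_nonneg hα v
  rw [Real.norm_of_nonneg (by positivity)]
  have : Real.exp (-(t * Real.exp v)) ≤ 1 := by
    rw [Real.exp_le_one_iff]
    have := mul_nonneg ht (Real.exp_pos v).le
    linarith
  nlinarith

lemma hh_int {α : ℝ} (hα : α ∈ Set.Ioo (0 : ℝ) 1) {t : ℝ} (ht : 0 ≤ t) :
    Integrable (fun v => Real.exp (-(t * Real.exp v)) * kk α v) := by
  have := kk_cont hα
  exact Integrable.mono' (kk_int hα) (by fun_prop) (Eventually.of_forall (hh_dom hα ht))

lemma hh_bound {α : ℝ} (hα : α ∈ Set.Ioo (0 : ℝ) 1) {t : ℝ} (ht : 0 ≤ t) :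
    |hh α t| ≤ ∫ v, kk α v :=
  norm_integral_le_of_norm_le (kk_int hα) (Eventually.of_forall (hh_dom hα ht))

lemma hh_cont {α : ℝ} (hα : α ∈ Set.Ioo (0 : ℝ) 1) : ContinuousOn (hh α) (Ici 0) := by
  have := kk_cont hα
  intro t ht
  unfold hh
  apply continuousWithinAt_of_dominated (bound := kk α)
  · exact Eventually.of_forall fun t => by fun_prop
  · filter_upwards [self_mem_nhdsWithin] with t ht
    exact Eventually.of_forall (hh_dom hα ht)
  · exact kk_int hα
  · refine Eventually.of_forall fun v => ?_
    apply Continuous.continuousWithinAt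
    fun_prop

lemma hh_laplace {α : ℝ} (hα : α ∈ Set.Ioo (0 : ℝ) 1) {s : ℝ} (hs : 0 < s) :
    ∫ t in Ioi (0:ℝ), Real.exp (-(s * t)) * hh α t = ∫ v, kk α v / (Real.exp v + s) := by
  have hkc := kk_cont hα
  have hexp : IntegrableOn (fun t : ℝ => Real.exp (-(s * t))) (Ioi 0) := by
    simpa using integrableOn_exp_mul_Ioi (neg_lt_zero.mpr hs) 0
  unfold hh
  simp_rw [← integral_const_mul]
  rw [integral_integral_swap]
  · refine integral_congr_ae (Eventually.of_forall fun v => ?_)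
    simp only
    have hp : 0 < Real.exp v + s := by positivity
    have : ∀ t : ℝ, Real.exp (-(s * t)) * (Real.exp (-(t * Real.exp v)) * kk α v) =
        Real.exp (-(Real.exp v + s) * t) * kk α v := by
      intro t
      rw [← mul_assoc, ← Real.exp_add]
      congr 2; ring
    simp_rw [this]
    rw [integral_mul_const, integral_exp_mul_Ioi (neg_lt_zero.mpr hp), mul_zero, Real.exp_zero,
      neg_div_neg_eq]
    ring
  · refine Integrable.mono' (hexp.mul_prod (kk_int hα)) ?_ ?_
    · apply Continuous.aestronglyMeasurable
      simp only [Function.uncurry_def]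
      fun_prop
    · have h1 : ∀ᵐ t ∂(volume.restrict (Ioi (0:ℝ))), 0 < t := ae_restrict_mem measurableSet_Ioi
      have h2 := Measure.quasiMeasurePreserving_fst (μ := volume.restrict (Ioi (0:ℝ)))
        (ν := (volume : Measure ℝ)) |>.ae h1
      filter_upwards [h2] with p hp
      have := hh_dom hα (le_of_lt hp) p.2
      simp only [Function.uncurry_def]
      rw [norm_mul, Real.norm_of_nonneg (Real.exp_pos _).le]
      gcongr

lemma ml_eq_hh {α : ℝ} (hα : α ∈ Set.Ioo (0 : ℝ) 1) {t : ℝ} (ht : 0 < t) :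
    mittagLeffler α (-(t ^ α)) = hh α t := by
  set d : ℝ → ℝ := fun t => Real.exp (-(2 * t)) * (mittagLeffler α (-(t ^ α)) - hh α t) with hd
  have hmlc : ContinuousOn (fun t : ℝ => mittagLeffler α (-(t ^ α))) (Ici 0) :=
    ((ml_continuous hα).comp (Real.continuous_rpow_const hα.1.le).neg).continuousOn
  have hdc : ContinuousOn d (Ici 0) :=
    ContinuousOn.mul (by fun_prop) (hmlc.sub (hh_cont hα))
  have key : ∀ t, 0 < t → d t = 0 := by
    obtain ⟨B, hB⟩ := (isCompact_singleton (x := (0:ℝ))).exists_bound_of_continuousOn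
      (f := d) (hdc.mono (by simp))
    refine laplace_unique hdc (M := (1 - (2:ℝ) ^ (-α))⁻¹ + (∫ v, kk α v) + |B|) ?_ ?_
    · intro t ht
      have hC : 0 < (1 - (2:ℝ) ^ (-α))⁻¹ := inv_pos.mpr (by linarith [two_rpow_lt hα])
      have hkI : 0 ≤ ∫ v, kk α v := integral_nonneg (kk_nonneg hα)
      rcases eq_or_lt_of_le ht with h0 | h0
      · subst h0
        have := hB 0 (by simp)
        rw [Real.norm_eq_abs] at this
        linarith [le_abs_self B]
      · have h1 := ml_bound hα h0
        have h2 := hh_bound hα ht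
        have e3 : Real.exp (-(2 * t)) * Real.exp (2 * t) = 1 := by rw [← Real.exp_add]; simp
        have e4 : Real.exp (-(2 * t)) ≤ 1 := by rw [Real.exp_le_one_iff]; linarith
        have e5 := Real.exp_pos (-(2 * t))
        simp only [hd]
        rw [abs_mul, abs_of_pos e5]
        calc Real.exp (-(2 * t)) * |mittagLeffler α (-t ^ α) - hh α t|
            ≤ Real.exp (-(2 * t)) * (Real.exp (2 * t) * (1 - (2:ℝ) ^ (-α))⁻¹ + ∫ v, kk α v) := by
              gcongr
              exact (abs_sub _ _).trans (by linarith)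
          _ = (1 - (2:ℝ) ^ (-α))⁻¹ + Real.exp (-(2 * t)) * ∫ v, kk α v := by
              rw [mul_add, ← mul_assoc, e3, one_mul]
          _ ≤ _ := by nlinarith [abs_nonneg B]
    · intro m
      set s : ℝ := m + 3 with hs
      have hs1 : 1 < s := by rw [hs]; have : (0:ℝ) ≤ m := by positivity
                             linarith
      have hs0 : 0 < s := by linarith
      have e1 : ∀ t : ℝ, Real.exp (-((m + 1 : ℝ) * t)) * d t =
          Real.exp (-(s * t)) * mittagLeffler α (-(t ^ α)) - Real.exp (-(s * t)) * hh α t := by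
        intro t
        simp only [hd]
        rw [← mul_sub, ← mul_assoc, ← Real.exp_add]
        congr 2
        rw [hs]; ring
      simp_rw [e1]
      have hexp : IntegrableOn (fun t : ℝ => Real.exp (-(s * t))) (Ioi 0) := by
        simpa using integrableOn_exp_mul_Ioi (neg_lt_zero.mpr hs0) 0
      have hexp2 : IntegrableOn (fun t : ℝ => Real.exp (-((m + 1 : ℝ) * t))) (Ioi 0) := by
        have : -(m + 1 : ℝ) < 0 := by have : (0:ℝ) ≤ m := by positivity
                                      linarith
        simpa only [neg_mul] using integrableOn_exp_mul_Ioi this 0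
      rw [integral_sub, ml_laplace hα hs1, hh_laplace hα hs0]
      · have hst := stieltjes hα (Real.log s)
        rw [Real.exp_log hs0] at hst
        rw [hst, mul_comm α, ← Real.rpow_def_of_pos hs0, Real.rpow_neg hs0.le]
        have : 0 < s ^ α := by positivity
        field_simp
        ring
      · refine Integrable.mono' (hexp2.mul_const ((1 - (2:ℝ) ^ (-α))⁻¹)) ?_ ?_
        · exact ((by fun_prop : Continuous fun t : ℝ => Real.exp (-(s * t))).aestronglyMeasurable.mul
            ((hmlc.mono Ioi_subset_Ici_self).aestronglyMeasurable measurableSet_Ioi))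
        · filter_upwards [ae_restrict_mem measurableSet_Ioi] with t ht
          have h1 := ml_bound hα (t := t) ht
          rw [norm_mul, Real.norm_of_nonneg (Real.exp_pos _).le, Real.norm_eq_abs]
          calc _ ≤ Real.exp (-(s * t)) * (Real.exp (2 * t) * (1 - (2:ℝ) ^ (-α))⁻¹) := by gcongr
            _ = _ := by
              rw [← mul_assoc, ← Real.exp_add]
              congr 2
              rw [hs]; ring
      · refine Integrable.mono' (hexp.mul_const (∫ v, kk α v)) ?_ ?_
        · exact ((by fun_prop : Continuous fun t : ℝ => Real.exp (-(s * t))).aestronglyMeasurable.mul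
            (((hh_cont hα).mono Ioi_subset_Ici_self).aestronglyMeasurable measurableSet_Ioi))
        · filter_upwards [ae_restrict_mem measurableSet_Ioi] with t ht
          have h1 := hh_bound hα (t := t) (le_of_lt ht)
          rw [norm_mul, Real.norm_of_nonneg (Real.exp_pos _).le, Real.norm_eq_abs]
          gcongr
  have := key t ht
  simp only [hd] at this
  have he := (Real.exp_pos (-(2 * t))).ne'
  have := (mul_eq_zero.mp this).resolve_left he
  linarith

lemma cq_hasSum (α : ℝ) {ξ : ℝ} (hξ : |ξ| < 1) :
    HasSum (fun j : ℕ => cqWeight α j * ξ ^ j) ((1 - ξ) ^ α) := by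
  have h := (Real.one_add_rpow_hasFPowerSeriesOnBall_zero (a := α)).hasSum (y := -ξ)
    (by simpa [← ofReal_norm] using hξ)
  have e1 : (1 + (0 + -ξ)) ^ α = (1 - ξ) ^ α := by ring_nf
  rw [e1] at h
  convert! h using 2 with j
  rw [binomialSeries_apply, Ring.choose_eq_smul]
  have h2 : (descPochhammer ℤ j).smeval α = ∏ i ∈ Finset.range j, (α - i) := by
    rw [← descPochhammer_eval_eq_prod_range, ← descPochhammer_map (Int.castRingHom ℝ), Polynomial.eval_map,
      Polynomial.eval₂_eq_sum, Polynomial.smeval_eq_sum]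
    congr 1
    funext e a
    simp [Polynomial.smul_pow]
  rw [h2]
  simp [cqWeight, List.ofFn_const, neg_pow ξ]
  ring

noncomputable def AA (α κ : ℝ) (n : ℕ) : ℝ := ∫ v, ((1 + κ * Real.exp v) ^ n)⁻¹ * kk α v

lemma one_le_aux {κ : ℝ} (hκ : 0 < κ) (v : ℝ) : 1 < 1 + κ * Real.exp v := by
  have : 0 < κ * Real.exp v := by positivity
  linarith

lemma AA_int {α : ℝ} (hα : α ∈ Set.Ioo (0 : ℝ) 1) {κ : ℝ} (hκ : 0 < κ) (n : ℕ) :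
    Integrable (fun v => ((1 + κ * Real.exp v) ^ n)⁻¹ * kk α v) := by
  refine (kk_int hα).mono' ?_ (ae_of_all _ fun v => ?_)
  · have : Continuous (fun v : ℝ => ((1 + κ * Real.exp v) ^ n)⁻¹) := by
      refine Continuous.inv₀ (by fun_prop) fun v => ?_
      have := one_le_aux hκ v
      positivity
    exact (this.mul (kk_cont hα)).aestronglyMeasurable
  · have h1 := one_le_aux hκ v
    have h2 := kk_nonneg hα v
    have h3 : ((1 + κ * Real.exp v) ^ n)⁻¹ ≤ 1 := inv_le_one_of_one_le₀ (one_le_pow₀ h1.le)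
    have h4 : 0 ≤ ((1 + κ * Real.exp v) ^ n)⁻¹ := by positivity
    rw [Real.norm_of_nonneg (by positivity)]
    exact mul_le_of_le_one_left h2 h3

lemma AA_hasSum {α : ℝ} (hα : α ∈ Set.Ioo (0 : ℝ) 1) {κ : ℝ} (hκ : 0 < κ) {ξ : ℝ} (hξ : |ξ| < 1) :
    HasSum (fun n : ℕ => ξ ^ n * AA α κ (n + 1))
      ((1 - ξ) ^ α / ((1 - ξ) ^ α + κ ^ α) / (1 - ξ)) := by
  have hs : 0 < 1 - ξ := by linarith [(abs_lt.1 hξ).2]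
  have hInteg : ∀ n : ℕ, Integrable
      (fun v => ξ ^ n * (((1 + κ * Real.exp v) ^ (n + 1))⁻¹ * kk α v)) := fun n =>
    (AA_int hα hκ (n + 1)).const_mul _
  have hK : 0 ≤ ∫ v, kk α v := integral_nonneg (kk_nonneg hα)
  have h := hasSum_integral_of_summable_integral_norm (μ := volume)
    (F := fun (n : ℕ) v => ξ ^ n * (((1 + κ * Real.exp v) ^ (n + 1))⁻¹ * kk α v)) hInteg ?_
  · convert! h using 1
    · funext n
      rw [AA, integral_const_mul]
    · have e : ∀ v, ∑' n : ℕ, ξ ^ n * (((1 + κ * Real.exp v) ^ (n + 1))⁻¹ * kk α v)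
          = κ⁻¹ * (kk α v / (Real.exp v + Real.exp (Real.log ((1 - ξ) / κ)))) := by
        intro v
        have h1 := one_le_aux hκ v
        rw [Real.exp_log (by positivity)]
        have hr : ‖ξ / (1 + κ * Real.exp v)‖ < 1 := by
          rw [norm_div, Real.norm_eq_abs, Real.norm_of_nonneg (by linarith), div_lt_one (by linarith)]
          linarith
        have hg := (hasSum_geometric_of_norm_lt_one hr).mul_left
          ((1 + κ * Real.exp v)⁻¹ * kk α v)
        have : (fun n : ℕ => ξ ^ n * (((1 + κ * Real.exp v) ^ (n + 1))⁻¹ * kk α v)) =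
            fun n : ℕ => (1 + κ * Real.exp v)⁻¹ * kk α v * (ξ / (1 + κ * Real.exp v)) ^ n := by
          funext n
          rw [div_pow, pow_succ]
          field_simp
        rw [this, hg.tsum_eq]
        have h5 : 0 < 1 + κ * Real.exp v := by linarith
        have h6 : 0 < κ * Real.exp v + (1 - ξ) := by linarith [(abs_lt.1 hξ).2]
        have h7 : 1 - ξ / (1 + κ * Real.exp v) = (κ * Real.exp v + (1 - ξ)) / (1 + κ * Real.exp v) := by
          field_simp; ring
        have h8 : Real.exp v + (1 - ξ) / κ = (κ * Real.exp v + (1 - ξ)) / κ := by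
          field_simp
        rw [h7, h8]
        field_simp
      simp_rw [e]
      rw [integral_const_mul, stieltjes hα, Real.exp_log (by positivity), mul_comm α,
        Real.exp_mul, Real.exp_log (by positivity), Real.div_rpow hs.le hκ.le]
      have h1 : 0 < (1 - ξ) ^ α := by positivity
      have h2 : 0 < κ ^ α := by positivity
      field_simp
  · refine Summable.of_nonneg_of_le (fun n => integral_nonneg fun v => norm_nonneg _) (fun n => ?_)
      ((summable_geometric_of_lt_one (abs_nonneg ξ) hξ).mul_right (∫ v, kk α v))
    rw [← integral_const_mul]
    refine integral_mono (hInteg n).norm ((kk_int hα).const_mul _) fun v => ?_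
    have h1 := one_le_aux hκ v
    have h2 := kk_nonneg hα v
    have h3 : ((1 + κ * Real.exp v) ^ (n + 1))⁻¹ ≤ 1 := inv_le_one_of_one_le₀ (one_le_pow₀ h1.le)
    have h4 : 0 ≤ ((1 + κ * Real.exp v) ^ (n + 1))⁻¹ := by positivity
    simp only [norm_mul, norm_pow, Real.norm_eq_abs]
    rw [abs_of_nonneg h4, abs_of_nonneg h2]
    gcongr
    exact mul_le_of_le_one_left h2 h3

/-- discrete solution minus one -/
noncomputable def cc (α κ : ℝ) (n : ℕ) : ℝ := if n = 0 then 0 else AA α κ n - 1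

noncomputable def aa (α κ : ℝ) (n : ℕ) : ℝ := if n = 0 then 0 else AA α κ n

lemma aa_hasSum {α : ℝ} (hα : α ∈ Set.Ioo (0 : ℝ) 1) {κ : ℝ} (hκ : 0 < κ) {ξ : ℝ} (hξ : |ξ| < 1) :
    HasSum (fun n : ℕ => aa α κ n * ξ ^ n)
      (ξ * ((1 - ξ) ^ α / ((1 - ξ) ^ α + κ ^ α) / (1 - ξ))) := by
  have h := (AA_hasSum hα hκ hξ).mul_left ξ
  have h3 : HasSum (fun n : ℕ => aa α κ (n + 1) * ξ ^ (n + 1))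
      (ξ * ((1 - ξ) ^ α / ((1 - ξ) ^ α + κ ^ α) / (1 - ξ))) := by
    convert! h using 2 with n
    simp [aa, pow_succ]; ring
  have h2 := (hasSum_nat_add_iff (f := fun n : ℕ => aa α κ n * ξ ^ n) 1).1 h3
  simpa [aa] using h2

lemma cc_hasSum {α : ℝ} (hα : α ∈ Set.Ioo (0 : ℝ) 1) {κ : ℝ} (hκ : 0 < κ) {ξ : ℝ} (hξ : |ξ| < 1) :
    HasSum (fun n : ℕ => cc α κ n * ξ ^ n)
      (ξ * ((1 - ξ) ^ α / ((1 - ξ) ^ α + κ ^ α) / (1 - ξ)) - ξ * (1 - ξ)⁻¹) := by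
  have h := ((AA_hasSum hα hκ hξ).mul_left ξ).sub
    ((hasSum_geometric_of_norm_lt_one (by simpa using hξ : ‖ξ‖ < 1)).mul_left ξ)
  have h3 : HasSum (fun n : ℕ => cc α κ (n + 1) * ξ ^ (n + 1))
      (ξ * ((1 - ξ) ^ α / ((1 - ξ) ^ α + κ ^ α) / (1 - ξ)) - ξ * (1 - ξ)⁻¹) := by
    convert! h using 2 with n
    simp [cc, pow_succ]; ring
  have h2 := (hasSum_nat_add_iff (f := fun n : ℕ => cc α κ n * ξ ^ n) 1).1 h3
  simpa [cc] using h2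

lemma scheme_AA {α : ℝ} (hα : α ∈ Set.Ioo (0 : ℝ) 1) {κ : ℝ} (hκ : 0 < κ) (n : ℕ) :
    (∑ j ∈ Finset.range (n + 1), cqWeight α j * cc α κ (n - j)) + κ ^ α * aa α κ n = 0 := by
  set e : ℕ → ℝ := fun n =>
    (∑ j ∈ Finset.range (n + 1), cqWeight α j * cc α κ (n - j)) + κ ^ α * aa α κ n with he
  have hsum : ∀ ξ : ℝ, |ξ| < 1 → HasSum (fun n => e n * ξ ^ n) 0 := by
    intro ξ hξ
    have hs : 0 < 1 - ξ := by linarith [(abs_lt.1 hξ).2]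
    have h1 := cq_hasSum α hξ
    have h2 := cc_hasSum hα hκ hξ
    have h3 := aa_hasSum hα hκ hξ
    have h4 := hasSum_sum_range_mul_of_summable_norm h1.summable.norm h2.summable.norm
    rw [h1.tsum_eq, h2.tsum_eq] at h4
    have h5 := h4.add (h3.mul_left (κ ^ α))
    convert! h5 using 1
    · funext n
      simp only [he]
      rw [add_mul, Finset.sum_mul]
      congr 1
      · refine Finset.sum_congr rfl fun j hj => ?_
        have : ξ ^ n = ξ ^ j * ξ ^ (n - j) := by
          rw [← pow_add]; congr 1
          have := Finset.mem_range.1 hj; omega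
        rw [this]; ring
      · ring
    · have a1 : 0 < (1 - ξ) ^ α := by positivity
      have a2 : 0 < κ ^ α := by positivity
      field_simp
      ring
  have hp : HasFPowerSeriesAt (0 : ℝ → ℝ) (FormalMultilinearSeries.ofScalars ℝ e) 0 := by
    rw [hasFPowerSeriesAt_iff]
    filter_upwards [Metric.ball_mem_nhds (0:ℝ) one_pos] with ξ hξ
    have := hsum ξ (by simpa using hξ)
    simpa [FormalMultilinearSeries.coeff_ofScalars, mul_comm] using this
  have h0 := hp.eq_zero
  have : (FormalMultilinearSeries.ofScalars ℝ e).coeff n = 0 := by rw [h0]; rfl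
  rwa [FormalMultilinearSeries.coeff_ofScalars] at this

lemma F_eq_AA {α : ℝ} (hα : α ∈ Set.Ioo (0 : ℝ) 1) {κ τ lam : ℝ} (hκ : 0 < κ) (hτ : 0 < τ)
    (hlam : 0 < lam) (hk : κ ^ α = lam * τ ^ α) (F : ℕ → ℝ) (hF0 : F 0 = 1)
    (hF : ∀ n : ℕ, 1 ≤ n →
      τ ^ (-α) * ∑ j ∈ Finset.range (n + 1), cqWeight α j * (F (n - j) - 1) + lam * F n = 0) :
    ∀ n : ℕ, F n - 1 = cc α κ n := by
  intro n
  induction n using Nat.strong_induction_on with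
  | _ n ih =>
    rcases Nat.eq_zero_or_pos n with rfl | hn
    · simp [cc, hF0]
    · have h1 := hF n hn
      have h2 := scheme_AA hα hκ n
      rw [Finset.sum_range_succ'] at h1 h2
      have hb : cqWeight α 0 = 1 := by simp [cqWeight]
      have hS : ∑ k ∈ Finset.range n, cqWeight α (k + 1) * (F (n - (k + 1)) - 1) =
          ∑ k ∈ Finset.range n, cqWeight α (k + 1) * cc α κ (n - (k + 1)) :=
        Finset.sum_congr rfl fun k hk => by rw [ih _ (by omega)]
      rw [hS] at h1
      set S := ∑ k ∈ Finset.range n, cqWeight α (k + 1) * cc α κ (n - (k + 1))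
      have ha : aa α κ n = cc α κ n + 1 := by
        simp [aa, cc, hn.ne']
      rw [hb, Nat.sub_zero, one_mul] at h1 h2
      rw [ha, hk] at h2
      have ht : τ ^ (-α) * τ ^ α = 1 := by rw [← Real.rpow_add hτ]; simp
      have ht2 : 0 < τ ^ α := by positivity
      have h3 : (1 + lam * τ ^ α) * (F n - 1 - cc α κ n) = 0 := by
        linear_combination τ ^ α * h1 - h2 - (S + (F n - 1)) * ht
      have h4 : 1 + lam * τ ^ α ≠ 0 := by positivity
      have := (mul_eq_zero.1 h3).resolve_left h4
      linarith

lemma pow_lower3 {w : ℝ} (hw : 0 ≤ w) {n : ℕ} (hn : 3 ≤ n) :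
    (1 + w / 3) ^ 3 ≤ (1 + w / n) ^ n := by
  have hn0 : (0:ℝ) < n := by positivity
  have hn3 : (3:ℝ) ≤ n := by exact_mod_cast hn
  have hy : 0 ≤ w / n := by positivity
  have hb := one_add_mul_self_le_rpow_one_add (s := w / n) (by linarith) (p := (n:ℝ) / 3)
    (by linarith)
  have e1 : (n:ℝ) / 3 * (w / n) = w / 3 := by field_simp
  rw [e1] at hb
  have e2 : ((1 + w / n) ^ ((n:ℝ) / 3)) ^ 3 = (1 + w / n) ^ n := by
    rw [← Real.rpow_natCast, ← Real.rpow_mul (by linarith), ← Real.rpow_natCast]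
    congr 1
    push_cast
    ring
  rw [← e2]
  gcongr

lemma diff_bound {w : ℝ} (hw : 0 ≤ w) {n : ℕ} (hn : 1 ≤ n) :
    0 ≤ ((1 + w / n) ^ n)⁻¹ - Real.exp (-w) ∧
    ((1 + w / n) ^ n)⁻¹ - Real.exp (-w) ≤ 14 * (n:ℝ)⁻¹ * (w / (1 + w) ^ 2) := by
  have hn0 : (0:ℝ) < n := by positivity
  have hn1 : (1:ℝ) ≤ n := by exact_mod_cast hn
  have hy : 0 ≤ w / n := by positivity
  have hpos : 0 < (1 + w / n) ^ n := by positivity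
  have hexp : (1 + w / n) ^ n = Real.exp (n * Real.log (1 + w / n)) := by
    rw [Real.exp_nat_mul, Real.exp_log (by positivity)]
  have hle : (1 + w / n) ^ n ≤ Real.exp w := by
    have h := Real.add_one_le_exp (w / n)
    calc (1 + w / n) ^ n ≤ (Real.exp (w / n)) ^ n := by gcongr; linarith
      _ = Real.exp w := by rw [← Real.exp_nat_mul]; congr 1; field_simp
  have h0 : 0 ≤ ((1 + w / n) ^ n)⁻¹ - Real.exp (-w) := by
    rw [Real.exp_neg, sub_nonneg]
    gcongr
  refine ⟨h0, ?_⟩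
  set D := ((1 + w / n) ^ n)⁻¹ - Real.exp (-w) with hD
  set Q := (1 + w / n) ^ n with hQ
  have hDQ1 : D * Q ≤ 1 := by
    have : D * Q = 1 - Real.exp (-w) * Q := by rw [hD]; field_simp
    have h2 : 0 < Real.exp (-w) * Q := by positivity
    linarith
  have hDQ2 : D * Q ≤ w ^ 2 / (2 * n) := by
    have e : D * Q = 1 - Real.exp (-w) * Q := by rw [hD]; field_simp
    have hlog := Real.le_log_one_add_of_nonneg hy
    have h3 : w / n - (w / n) ^ 2 / 2 ≤ 2 * (w / n) / (w / n + 2) := by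
      rw [le_div_iff₀ (by linarith)]
      nlinarith [mul_nonneg (mul_nonneg hy hy) hy]
    have h4 : w - w ^ 2 / (2 * n) ≤ n * Real.log (1 + w / n) := by
      calc w - w ^ 2 / (2 * n) = n * (w / n - (w / n) ^ 2 / 2) := by field_simp
        _ ≤ _ := by gcongr; linarith
    have h5 : 1 - w ^ 2 / (2 * n) ≤ Real.exp (-w) * Q := by
      rw [hexp, ← Real.exp_add]
      have := Real.add_one_le_exp (-w + n * Real.log (1 + w / n))
      linarith
    linarith
  rw [show 14 * (n:ℝ)⁻¹ * (w / (1 + w) ^ 2) = (14 * w / (1 + w) ^ 2) / n by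
    field_simp, le_div_iff₀ hn0, le_div_iff₀ (by positivity)]
  rcases le_or_gt 3 n with h3 | h3
  · have hq : (1 + w) ^ 3 / 27 ≤ Q := by
      refine le_trans ?_ (pow_lower3 hw h3)
      have : (1 + w) / 3 ≤ 1 + w / 3 := by linarith
      calc (1 + w) ^ 3 / 27 = ((1 + w) / 3) ^ 3 := by ring
        _ ≤ _ := by gcongr
    have h4 : D * ((1 + w) ^ 3 / 27) ≤ w ^ 2 / (2 * n) :=
      (mul_le_mul_of_nonneg_left hq h0).trans hDQ2
    have h5 : D * n * (1 + w) ^ 3 ≤ 27 / 2 * w ^ 2 := by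
      rw [le_div_iff₀ (by positivity)] at h4
      nlinarith
    have h6 : D * n * (1 + w) ^ 2 * (1 + w) ≤ 14 * w * (1 + w) := by
      nlinarith
    exact le_of_mul_le_mul_right h6 (by linarith)
  · have hq : 1 + w ≤ Q := by
      have := one_add_mul_le_pow (a := w / n) (by linarith) n
      have e : (n:ℝ) * (w / n) = w := by field_simp
      rwa [e] at this
    have h4 : D * (1 + w) ≤ D * Q := mul_le_mul_of_nonneg_left hq h0
    have hn2 : (n:ℝ) ≤ 2 := by exact_mod_cast (by omega : n ≤ 2)
    have h5 : D * (1 + w) ≤ 1 := h4.trans hDQ1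
    have h6 : D * (1 + w) ≤ w ^ 2 := by
      refine (h4.trans hDQ2).trans ?_
      rw [div_le_iff₀ (by positivity)]
      nlinarith [sq_nonneg w]
    have h7 : D * (1 + w) * (1 + w) ≤ 2 * w := by
      rcases le_or_gt w 1 with h | h
      · calc D * (1 + w) * (1 + w) ≤ w ^ 2 * (1 + w) := by gcongr
          _ ≤ 2 * w := by nlinarith
      · calc D * (1 + w) * (1 + w) ≤ 1 * (1 + w) := by gcongr
          _ ≤ 2 * w := by linarith
    calc D * n * (1 + w) ^ 2 = n * (D * (1 + w) * (1 + w)) := by ring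
      _ ≤ 2 * (2 * w) := by gcongr
      _ ≤ 14 * w := by linarith

noncomputable def ff (α v : ℝ) : ℝ := Real.exp (α * v) / (1 + Real.exp v)

lemma ff_int {α : ℝ} (hα : α ∈ Set.Ioo (0 : ℝ) 1) : Integrable (ff α) := by
  have hpos : ∀ v : ℝ, 0 < 1 + Real.exp v := fun v => by positivity
  refine integrable_of_two_exp (C := 1) (a := α) (b := 1 - α) ?_ hα.1 (by linarith [hα.2]) ?_ ?_
  · unfold ff
    exact Continuous.div (by fun_prop) (by fun_prop) fun v => (hpos v).ne'
  · intro v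
    unfold ff
    rw [abs_of_nonneg (by positivity), one_mul]
    exact div_le_self (by positivity) (by linarith [Real.exp_pos v])
  · intro v
    unfold ff
    rw [abs_of_nonneg (by positivity), one_mul, div_le_iff₀ (hpos v)]
    have : Real.exp (α * v) = Real.exp (-((1 - α) * v)) * Real.exp v := by
      rw [← Real.exp_add]; ring_nf
    rw [this]
    gcongr
    linarith

lemma psi_int {α : ℝ} (hα : α ∈ Set.Ioo (0 : ℝ) 1) {N : ℝ} (hN : 0 < N) :
    Integrable (fun v => N * Real.exp v / (1 + N * Real.exp v) ^ 2 * kk α v) := by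
  refine (kk_int hα).mono' ?_ (ae_of_all _ fun v => ?_)
  · refine Continuous.aestronglyMeasurable (Continuous.mul ?_ (kk_cont hα))
    refine Continuous.div (by fun_prop) (by fun_prop) fun v => ?_
    positivity
  · have h2 := kk_nonneg hα v
    rw [Real.norm_of_nonneg (by positivity)]
    refine mul_le_of_le_one_left h2 ?_
    have : 0 < N * Real.exp v := by positivity
    rw [div_le_one (by positivity)]
    nlinarith

lemma psi_bound {α : ℝ} (hα : α ∈ Set.Ioo (0 : ℝ) 1) {N : ℝ} (hN : 0 < N) :
    (1 + N ^ α) * ∫ v, N * Real.exp v / (1 + N * Real.exp v) ^ 2 * kk α v ≤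
      (∫ v, kk α v) + 1 / (π * Real.sin (π * α)) * ∫ v, ff α v := by
  set K := 1 / (π * Real.sin (π * α)) with hK
  have hs := sin_pos_aux hα
  have hK0 : 0 < K := by rw [hK]; positivity
  have hNa : 0 < N ^ α := by positivity
  have h1 : ∫ v, N * Real.exp v / (1 + N * Real.exp v) ^ 2 * kk α v ≤ ∫ v, kk α v := by
    refine integral_mono (psi_int hα hN) (kk_int hα) fun v => ?_
    have h2 := kk_nonneg hα v
    refine mul_le_of_le_one_left h2 ?_
    have : 0 < N * Real.exp v := by positivity
    rw [div_le_one (by positivity)]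
    nlinarith
  have h2 : N ^ α * ∫ v, N * Real.exp v / (1 + N * Real.exp v) ^ 2 * kk α v ≤
      K * ∫ v, ff α v := by
    rw [← integral_add_right_eq_self (ff α) (Real.log N), ← integral_const_mul,
      ← integral_const_mul]
    refine integral_mono ((psi_int hα hN).const_mul _)
      (((ff_int hα).comp_add_right (Real.log N)).const_mul K) fun v => ?_
    have hw : 0 < N * Real.exp v := by positivity
    have e : ff α (v + Real.log N) = N ^ α * Real.exp (α * v) / (1 + N * Real.exp v) := by
      unfold ff
      rw [mul_add, Real.exp_add, Real.exp_add, Real.exp_log hN, mul_comm α (Real.log N),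
        Real.exp_mul (Real.log N), Real.exp_log hN]
      ring
    have hk := kk_le1 hα v
    rw [← hK] at hk
    have hp : N * Real.exp v / (1 + N * Real.exp v) ^ 2 ≤ 1 / (1 + N * Real.exp v) := by
      rw [div_le_div_iff₀ (by positivity) (by positivity)]
      nlinarith
    simp only [e]
    calc N ^ α * (N * Real.exp v / (1 + N * Real.exp v) ^ 2 * kk α v)
        ≤ N ^ α * (1 / (1 + N * Real.exp v) * (K * Real.exp (α * v))) := by
          gcongr
          exact kk_nonneg hα v
      _ = _ := by ring
  linarith

lemma err_bound {α : ℝ} (hα : α ∈ Set.Ioo (0 : ℝ) 1) {κ : ℝ} (hκ : 0 < κ) {n : ℕ} (hn : 1 ≤ n) :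
    |hh α (κ * n) - AA α κ n| ≤ 14 * (n:ℝ)⁻¹ *
      ∫ v, (κ * n) * Real.exp v / (1 + (κ * n) * Real.exp v) ^ 2 * kk α v := by
  have hn0 : (0:ℝ) < n := by positivity
  have hN : 0 < κ * n := by positivity
  rw [abs_sub_comm, hh, AA, ← integral_sub (AA_int hα hκ n) (hh_int hα hN.le),
    ← integral_const_mul, ← Real.norm_eq_abs]
  refine norm_integral_le_of_norm_le ((psi_int hα hN).const_mul _) (ae_of_all _ fun v => ?_)
  have hb := diff_bound (w := κ * n * Real.exp v) (by positivity) hn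
  have e : κ * n * Real.exp v / n = κ * Real.exp v := by field_simp
  rw [e] at hb
  have h2 := kk_nonneg hα v
  rw [← sub_mul, Real.norm_of_nonneg (mul_nonneg hb.1 h2)]
  calc _ ≤ 14 * (n:ℝ)⁻¹ * (κ * n * Real.exp v / (1 + κ * n * Real.exp v) ^ 2) * kk α v :=
        mul_le_mul_of_nonneg_right hb.2 h2
    _ = _ := by ring

lemma main_aux (α : ℝ) (hα : α ∈ Set.Ioo (0 : ℝ) 1) :
    ∃ c : ℝ, 0 < c ∧
      ∀ τ lam : ℝ, 0 < τ → 0 < lam → ∀ F : ℕ → ℝ, F 0 = 1 →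
        (∀ n : ℕ, 1 ≤ n →
          τ ^ (-α) * ∑ j ∈ Finset.range (n + 1), cqWeight α j * (F (n - j) - 1)
            + lam * F n = 0) →
        ∀ n : ℕ, 1 ≤ n →
          |mittagLeffler α (-(lam * ((n : ℝ) * τ) ^ α)) - F n|
            ≤ c / (1 + lam * ((n : ℝ) * τ) ^ α) * (n : ℝ)⁻¹ := by
  set M := (∫ v, kk α v) + 1 / (π * Real.sin (π * α)) * ∫ v, ff α v with hM
  have hs := sin_pos_aux hα
  have hM0 : 0 ≤ M := by
    have h1 : 0 ≤ ∫ v, kk α v := integral_nonneg (kk_nonneg hα)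
    have h2 : 0 ≤ ∫ v, ff α v := integral_nonneg fun v => by unfold ff; positivity
    rw [hM]
    positivity
  refine ⟨14 * M + 1, by positivity, ?_⟩
  intro τ lam hτ hlam F hF0 hF n hn
  have hn0 : (0:ℝ) < n := by positivity
  set κ := (lam * τ ^ α) ^ (1 / α) with hκd
  have hκ : 0 < κ := by positivity
  have hk : κ ^ α = lam * τ ^ α := by
    rw [hκd, ← Real.rpow_mul (by positivity), one_div_mul_cancel hα.1.ne', Real.rpow_one]
  have hFn : F n = AA α κ n := by
    have := F_eq_AA hα hκ hτ hlam hk F hF0 hF n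
    have hn' : n ≠ 0 := by omega
    simp only [cc, hn', if_false] at this
    linarith
  have hN : 0 < κ * n := by positivity
  have hx : lam * ((n : ℝ) * τ) ^ α = (κ * n) ^ α := by
    rw [Real.mul_rpow hκ.le hn0.le, hk, Real.mul_rpow hn0.le hτ.le]
    ring
  rw [hx, hFn, ml_eq_hh hα hN]
  refine (err_bound hα hκ hn).trans ?_
  have hp := psi_bound hα hN
  rw [← hM] at hp
  have hNa : 0 < 1 + (κ * n) ^ α := by positivity
  rw [mul_comm, ← le_div_iff₀ hNa] at hp
  calc _ ≤ 14 * (n:ℝ)⁻¹ * (M / (1 + (κ * n) ^ α)) := by gcongr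
    _ = (14 * M) / (1 + (κ * n) ^ α) * (n:ℝ)⁻¹ := by ring
    _ ≤ _ := by gcongr; linarith

end CQHelpers

/-- λ-dependent error bound for the backward Euler CQ approximation `F_τ^n(λ)`
(characterized by the discrete scheme `∂̄_τ^α(F^n − 1) + λ F^n = 0`, `F^0 = 1`) of the
Mittag-Leffler function: `|E_{α,1}(-λ t_n^α) − F_τ^n(λ)| ≤ c n⁻¹/(1 + λ t_n^α)`. -/
theorem cq_ml_error_bound (α : ℝ) (hα : α ∈ Set.Ioo (0 : ℝ) 1) :
    ∃ c : ℝ, 0 < c ∧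
      ∀ τ lam : ℝ, 0 < τ → 0 < lam → ∀ F : ℕ → ℝ, F 0 = 1 →
        (∀ n : ℕ, 1 ≤ n →
          τ ^ (-α) * ∑ j ∈ Finset.range (n + 1), cqWeight α j * (F (n - j) - 1)
            + lam * F n = 0) →
        ∀ n : ℕ, 1 ≤ n →
          |mittagLeffler α (-(lam * ((n : ℝ) * τ) ^ α)) - F n|
            ≤ c / (1 + lam * ((n : ℝ) * τ) ^ α) * (n : ℝ)⁻¹ :=
  main_aux α hα
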